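/- For every continuous f : Σ_N^+ → ℝ, the function G_μ f belongs to D_0 with Δ(G_μ f) = −f; that is, lim_{m→∞} max_{p ∈ V_m ∖ V_0} |N^{m+1} H_m(G_μ f)(p) + f(p)| = 0. -/

import Mathlib

open Filter Topology MeasureTheory Finset Classical

noncomputable section

/-- The one-sided full shift space `Σ_N^+` on `N` symbols; coordinates are indexed
from `0`, so the paper's `x_1 x_2 ⋯` is `x 0, x 1, ⋯` here. It carries the product
of the discrete topology on `Fin N`. -/
abbrev SSp (N : ℕ) : Type := ℕ → Fin N

/-- The level-`m` vertex set `V_m = {p : p_i = p_{i+1} for all i ≥ m+1}` (1-based),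
i.e. the sequences that are constant from (0-based) coordinate `m` on.  It is
realized as a `Finset` via the parametrization by the first `m+1` coordinates;
see `mem_V` for the defining property. -/
noncomputable def V (N m : ℕ) : Finset (SSp N) :=
  (Finset.univ : Finset (Fin (m + 1) → Fin N)).image
    (fun w j => w ⟨min j m, by omega⟩)

lemma const_from (N m : ℕ) (p : SSp N) (h : ∀ i, m ≤ i → p i = p (i + 1)) :
    ∀ j, m ≤ j → p j = p m := by
  intro j hj
  induction j with
  | zero => have : m = 0 := by omega
            simp [this]
  | succ k ih =>
      rcases Nat.lt_or_ge k m with hk | hk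
      · have : m = k + 1 := by omega
        simp [this]
      · rw [← h k hk]
        exact ih hk

/-- Membership in `V N m` is exactly the paper's condition
`p_i = p_{i+1}` for all `i ≥ m+1` (1-based), i.e. `p i = p (i+1)` for all `i ≥ m`. -/
lemma mem_V {N m : ℕ} {p : SSp N} :
    p ∈ V N m ↔ ∀ i, m ≤ i → p i = p (i + 1) := by
  classical
  constructor
  · intro hp i hi
    simp only [V, Finset.mem_image] at hp
    obtain ⟨w, -, rfl⟩ := hp
    have h1 : min i m = m := by omega
    have h2 : min (i + 1) m = m := by omega
    simp [h1, h2]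
  · intro h
    simp only [V, Finset.mem_image]
    refine ⟨fun j => p j, Finset.mem_univ _, ?_⟩
    funext j
    rcases Nat.lt_or_ge j m with hj | hj
    · have : min j m = j := by omega
      simp [this]
    · have : min j m = m := by omega
      simp only [this]
      exact (const_from N m p h j hj).symm

/-- The deleted neighbourhood `U_{p,m} = {q ∈ V_m : q ≠ p, q_i = p_i for 1 ≤ i ≤ m}`
(1-based), i.e. `q` agrees with `p` on the first `m` (0-based: `i < m`) coordinates. -/
noncomputable def U (N m : ℕ) (p : SSp N) : Finset (SSp N) :=
  (V N m).filter (fun q => q ≠ p ∧ ∀ i, i < m → q i = p i)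

/-- `κ_p = min {j : p ∈ V_j}`. -/
noncomputable def kappa (N : ℕ) (p : SSp N) : ℕ := sInf {j | p ∈ V N j}

/-- The difference operator
`H_m u (p) = Σ_{i = κ_p}^{m} Σ_{q ∈ U_{p,i}} (u(q) − u(p))`. -/
noncomputable def H (N m : ℕ) (u : SSp N → ℝ) (p : SSp N) : ℝ :=
  ∑ i ∈ Finset.Icc (kappa N p) m, ∑ q ∈ U N i p, (u q - u p)

/-- The Dirichlet form `E_{H_m}(u, v) = − Σ_{p ∈ V_m} u(p) · H_m v(p)`. -/
noncomputable def EH (N m : ℕ) (u v : SSp N → ℝ) : ℝ :=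
  -∑ p ∈ V N m, u p * H N m v p

/-- The cylinder set `[p_1 ⋯ p_m]`, determined by the first `m` coordinates of `p`. -/
def cyl (N m : ℕ) (p : SSp N) : Set (SSp N) := {x | ∀ i, i < m → x i = p i}

/-- `χ_p^m` : the indicator function of the cylinder set `[p_1 ⋯ p_{m+1}]`. -/
noncomputable def chi (N m : ℕ) (p : SSp N) : SSp N → ℝ :=
  (cyl N (m + 1) p).indicator 1

/-- `u ∈ dom E`: `u` is continuous and the energy
`E(u) = lim_m E_{H_m}(u|_{V_m})` exists (and is finite). -/
def MemDomE (N : ℕ) (u : SSp N → ℝ) : Prop :=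
  Continuous u ∧ ∃ L : ℝ, Tendsto (fun m => EH N m u u) atTop (nhds L)

/-- `v ∈ dom_M E`: `v` has finite energy and vanishes on the boundary `V_M`. -/
def MemDomME (N M : ℕ) (v : SSp N → ℝ) : Prop :=
  MemDomE N v ∧ ∀ p ∈ V N M, v p = 0

/-- `u ∈ 𝒟_M` with `Δ u = f` (strong formulation with boundary `V_M`):
`u` and `f` are continuous and
`lim_{m → ∞} max_{p ∈ V_m ∖ V_M} |N^{m+1} H_m u(p) − f(p)| = 0`. -/
def IsLaplacianOn (N M : ℕ) (u f : SSp N → ℝ) : Prop :=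
  Continuous u ∧ Continuous f ∧
    ∀ ε : ℝ, 0 < ε → ∃ m₀ : ℕ, ∀ m, m₀ ≤ m → ∀ p ∈ V N m, p ∉ V N M →
      |(N : ℝ) ^ (m + 1) * H N m u p - f p| < ε

/-- `u ∈ D_μ` with `Δ u = f` (original definition of the Laplacian):
`u` and `f` are continuous and
`lim_{m → ∞} max_{p ∈ V_m ∖ V_{m−1}} |N^{m+1} H_m u(p) − f(p)| = 0`
(the level is written `m+1` to avoid natural subtraction). -/
def IsLaplacianDmu (N : ℕ) (u f : SSp N → ℝ) : Prop :=
  Continuous u ∧ Continuous f ∧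
    ∀ ε : ℝ, 0 < ε → ∃ m₀ : ℕ, ∀ m, m₀ ≤ m → ∀ p ∈ V N (m + 1), p ∉ V N m →
      |(N : ℝ) ^ (m + 2) * H N (m + 1) u p - f p| < ε

/-- `μ` is the equidistributed Bernoulli measure:
`μ([p_1 ⋯ p_m]) = N^{−m}` for every cylinder set. -/
def IsBernoulli (N : ℕ) (μ : Measure (SSp N)) : Prop :=
  ∀ (m : ℕ) (p : SSp N), μ (cyl N m p) = (N : ENNReal)⁻¹ ^ m

/-- `ρ(x,y) = min {i : x_i ≠ y_i}` (1-based; `0`-based first disagreement plus one). -/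
noncomputable def rho (N : ℕ) (x y : SSp N) : ℕ := sInf {i | x i ≠ y i} + 1

/-- The matrix `(G_m)_{pq}`: `2/N` if `q = p`, `1/N` if `q ∈ U_{p,m}`, `0` otherwise. -/
noncomputable def Gmat (N m : ℕ) (p q : SSp N) : ℝ :=
  if q = p then 2 / N else if q ∈ U N m p then 1 / N else 0

/-- The Green's function
`g(x,y) = Σ_{m=1}^{ρ(x,y)−1} Σ_{r,s ∈ V_m ∖ V_{m−1}} (G_m)_{rs} χ_r^m(x) χ_s^m(y)`
for `ρ(x,y) > 1`, and `g(x,y) = 0` for `ρ(x,y) = 1` (the sum is then empty). -/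
noncomputable def greenFn (N : ℕ) (x y : SSp N) : ℝ :=
  ∑ m ∈ Finset.Icc 1 (rho N x y - 1),
    ∑ r ∈ (V N m).filter (fun r => r ∉ V N (m - 1)),
      ∑ s ∈ (V N m).filter (fun s => s ∉ V N (m - 1)),
        Gmat N m r s * chi N m r x * chi N m s y

/-- The Green's operator `G_μ f (x) = ∫_{Σ_N^+ ∖ {x}} g(x,y) f(y) dμ(y)`. -/
noncomputable def Gop (N : ℕ) (μ : Measure (SSp N)) (f : SSp N → ℝ) (x : SSp N) : ℝ :=
  ∫ y in ({x}ᶜ : Set (SSp N)), greenFn N x y * f y ∂μ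

variable {N : ℕ}

/-- The sequence that follows `p` before coordinate `i` and is constantly `c` from `i` on. -/
def branch (p : SSp N) (i : ℕ) (c : Fin N) : SSp N := fun j => if j < i then p j else c

lemma branch_of_lt {p : SSp N} {i j : ℕ} {c : Fin N} (h : j < i) : branch p i c j = p j :=
  if_pos h

lemma branch_of_le {p : SSp N} {i j : ℕ} {c : Fin N} (h : i ≤ j) : branch p i c j = c :=
  if_neg (not_lt.2 h)

lemma branch_mem_V (p : SSp N) (i : ℕ) (c : Fin N) : branch p i c ∈ V N i :=
  mem_V.2 fun j hj => by rw [branch_of_le hj, branch_of_le (by omega)]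

lemma branch_self {p : SSp N} {i : ℕ} (hp : p ∈ V N i) : branch p i (p i) = p := by
  funext j
  rcases lt_or_ge j i with h | h
  · exact branch_of_lt h
  · rw [branch_of_le h, const_from N i p (mem_V.1 hp) j h]

lemma branch_congr {p q : SSp N} {i : ℕ} (h : ∀ j < i, p j = q j) (c : Fin N) :
    branch p i c = branch q i c := by
  funext j
  by_cases hj : j < i
  · rw [branch_of_lt hj, branch_of_lt hj, h j hj]
  · rw [branch_of_le (not_lt.1 hj), branch_of_le (not_lt.1 hj)]

lemma V_mono {i j : ℕ} (h : i ≤ j) : V N i ⊆ V N j :=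
  fun _ hp => mem_V.2 fun k hk => mem_V.1 hp k (h.trans hk)

lemma mem_V_of_succ {p : SSp N} {i : ℕ} (hp : p ∈ V N (i + 1)) :
    p ∈ V N i ↔ p i = p (i + 1) := by
  refine ⟨fun h => mem_V.1 h i le_rfl, fun h => mem_V.2 fun j hj => ?_⟩
  rcases hj.eq_or_lt with rfl | hj
  · exact h
  · exact mem_V.1 hp j hj

lemma branch_succ_mem_V (x : SSp N) (i : ℕ) :
    branch x (i + 1) (x (i + 1)) ∈ V N i ↔ x i = x (i + 1) := by
  rw [mem_V_of_succ (branch_mem_V _ _ _), branch_of_lt (Nat.lt_succ_self i), branch_of_le le_rfl]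

lemma U_eq_image_branch {p : SSp N} {i : ℕ} (hp : p ∈ V N i) :
    U N i p = (univ.erase (p i)).image (branch p i) := by
  ext q
  simp only [U, Finset.mem_filter, Finset.mem_image, Finset.mem_erase, Finset.mem_univ, and_true]
  constructor
  · rintro ⟨hq, hne, hqp⟩
    have hb : branch p i (q i) = q := by
      rw [← branch_congr hqp, branch_self hq]
    refine ⟨q i, fun h => hne ?_, hb⟩
    rw [← hb, h, branch_self hp]
  · rintro ⟨c, hc, rfl⟩
    refine ⟨branch_mem_V _ _ _, fun h => hc ?_, fun j hj => branch_of_lt hj⟩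
    rw [← branch_of_le (p := p) (c := c) (le_refl i), h]

lemma branch_injective (p : SSp N) (i : ℕ) : Function.Injective (branch p i) := fun c d h => by
  simpa only [branch_of_le le_rfl] using congrFun h i

lemma sum_U {p : SSp N} {i : ℕ} (hp : p ∈ V N i) (φ : SSp N → ℝ) :
    ∑ q ∈ U N i p, φ q = ∑ c ∈ univ.erase (p i), φ (branch p i c) := by
  rw [U_eq_image_branch hp, Finset.sum_image (branch_injective p i).injOn]

lemma cyl_congr {n : ℕ} {x y : SSp N} (h : ∀ i < n, x i = y i) : cyl N n x = cyl N n y := by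
  ext z
  exact forall₂_congr fun i hi => by rw [h i hi]

lemma cyl_anti (x : SSp N) {m n : ℕ} (h : m ≤ n) : cyl N n x ⊆ cyl N m x :=
  fun _ hy i hi => hy i (hi.trans_le h)

lemma cyl_branch_subset (x : SSp N) (n : ℕ) (c : Fin N) :
    cyl N (n + 1) (branch x n c) ⊆ cyl N n x :=
  fun y hy i hi => by rw [hy i (by omega), branch_of_lt hi]

lemma mem_cyl_branch {x y : SSp N} {n : ℕ} {c : Fin N} :
    y ∈ cyl N (n + 1) (branch x n c) ↔ y ∈ cyl N n x ∧ y n = c := by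
  refine ⟨fun h => ⟨cyl_branch_subset x n c h, ?_⟩, fun ⟨h, hc⟩ i hi => ?_⟩
  · rw [h n (by omega), branch_of_le le_rfl]
  · rcases (Nat.lt_succ_iff.1 hi).lt_or_eq with h' | rfl
    · rw [branch_of_lt h', h i h']
    · rw [branch_of_le le_rfl, hc]

lemma mem_cyl_succ {x y : SSp N} {n : ℕ} :
    y ∈ cyl N (n + 1) x ↔ y ∈ cyl N n x ∧ y n = x n := by
  rw [← mem_cyl_branch, cyl_congr (x := x) (y := branch x n (x n))]
  intro i hi
  rcases (Nat.lt_succ_iff.1 hi).lt_or_eq with h' | rfl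
  · rw [branch_of_lt h']
  · rw [branch_of_le le_rfl]

lemma isOpen_cyl (n : ℕ) (x : SSp N) : IsOpen (cyl N n x) := by
  have : cyl N n x = ⋂ i ∈ Finset.range n, (fun y : SSp N => y i) ⁻¹' {x i} := by
    ext y; simp [cyl]
  rw [this]
  exact isOpen_biInter_finset fun i _ => (isOpen_discrete _).preimage (continuous_apply i)

lemma measurableSet_cyl (n : ℕ) (x : SSp N) : MeasurableSet (cyl N n x) :=
  (isOpen_cyl n x).measurableSet

/-- A function depending only on the first `n` coordinates is continuous. -/
lemma continuous_of_cyl {n : ℕ} {φ : SSp N → ℝ}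
    (h : ∀ x y : SSp N, (∀ i < n, x i = y i) → φ x = φ y) : Continuous φ := by
  refine continuous_iff_continuousAt.2 fun x => ?_
  have : φ =ᶠ[𝓝 x] fun _ => φ x := by
    filter_upwards [(isOpen_cyl n x).mem_nhds (fun i _ => rfl)] with y hy
    exact h y x hy
  exact continuousAt_const.congr this.symm

lemma exists_forall_cyl_abs_sub_lt {f : SSp N → ℝ} (hf : Continuous f) {ε : ℝ} (hε : 0 < ε) :
    ∃ n, ∀ x y : SSp N, y ∈ cyl N n x → |f y - f x| < ε := by
  let _ : MetricSpace (SSp N) := PiNat.metricSpace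
  obtain ⟨δ, hδ, h⟩ :=
    Metric.uniformContinuous_iff.1 (CompactSpace.uniformContinuous_of_continuous hf) ε hε
  obtain ⟨n, hn⟩ := exists_pow_lt_of_lt_one hδ (by norm_num : (1 / 2 : ℝ) < 1)
  refine ⟨n, fun x y hy => ?_⟩
  have hd : dist y x ≤ (1 / 2 : ℝ) ^ n := PiNat.mem_cylinder_iff_dist_le.1 hy
  exact h (hd.trans_lt hn)

lemma exists_abs_le {f : SSp N → ℝ} (hf : Continuous f) : ∃ C : ℝ, ∀ x, |f x| ≤ C := by
  obtain ⟨C, hC⟩ := (isCompact_univ (X := SSp N)).exists_bound_of_continuousOn hf.continuousOn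
  exact ⟨C, fun x => hC x (Set.mem_univ x)⟩

lemma integrable_of_continuous {μ : Measure (SSp N)} [IsFiniteMeasure μ] {f : SSp N → ℝ}
    (hf : Continuous f) : Integrable f μ := by
  obtain ⟨C, hC⟩ := exists_abs_le hf
  exact Integrable.of_bound hf.measurable.aestronglyMeasurable C (ae_of_all _ hC)

lemma IsBernoulli.real_cyl {μ : Measure (SSp N)} (hμ : IsBernoulli N μ) (n : ℕ) (x : SSp N) :
    μ.real (cyl N n x) = ((N : ℝ)⁻¹) ^ n := by
  simp [Measure.real, hμ n x]

lemma IsBernoulli.measure_singleton {μ : Measure (SSp N)} (hμ : IsBernoulli N μ) (hN : 2 ≤ N)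
    (x : SSp N) : μ {x} = 0 := by
  have hlt : (N : ENNReal)⁻¹ < 1 := ENNReal.inv_lt_one.2 (by exact_mod_cast hN)
  refine le_antisymm (ge_of_tendsto' (ENNReal.tendsto_pow_atTop_nhds_zero_of_lt_one hlt)
    fun n => ?_) bot_le
  rw [← hμ n x]
  exact measure_mono (Set.singleton_subset_iff.2 fun i _ => rfl)

/-- The integral of `f` over the cylinder set given by the first `n` coordinates of `x`. -/
def cylInt (μ : Measure (SSp N)) (f : SSp N → ℝ) (n : ℕ) (x : SSp N) : ℝ :=
  ∫ y in cyl N n x, f y ∂μ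

lemma cylInt_congr (μ : Measure (SSp N)) (f : SSp N → ℝ) {n : ℕ} {x y : SSp N}
    (h : ∀ i < n, x i = y i) : cylInt μ f n x = cylInt μ f n y := by
  rw [cylInt, cylInt, cyl_congr h]

lemma sum_cylInt_branch {μ : Measure (SSp N)} {f : SSp N → ℝ}
    (hf : Integrable f μ) (n : ℕ) (x : SSp N) :
    ∑ c, cylInt μ f (n + 1) (branch x n c) = cylInt μ f n x := by
  have hU : cyl N n x = ⋃ c, cyl N (n + 1) (branch x n c) := by
    ext y
    simp [mem_cyl_branch]
  unfold cylInt
  rw [hU, integral_iUnion_fintype (fun c => measurableSet_cyl _ _) _ (fun c => hf.integrableOn)]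
  intro c d hcd
  refine Set.disjoint_left.2 fun y hc hd => hcd ?_
  rw [← (mem_cyl_branch.1 hc).2, (mem_cyl_branch.1 hd).2]

/-- The level-`(m+1)` summand of the Green's function in closed form. -/
def greenKer (m : ℕ) (x y : SSp N) : ℝ :=
  if x m ≠ x (m + 1) then
    1 / N * ((cyl N (m + 1) x).indicator 1 y
      - (cyl N (m + 2) (branch x (m + 1) (x m))).indicator 1 y
      + (cyl N (m + 2) x).indicator 1 y)
  else 0

/-- The level-`(m+1)` summand of the Green's operator in closed form. -/
def greenTerm (μ : Measure (SSp N)) (f : SSp N → ℝ) (m : ℕ) (x : SSp N) : ℝ :=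
  if x m ≠ x (m + 1) then
    1 / N * (cylInt μ f (m + 1) x - cylInt μ f (m + 2) (branch x (m + 1) (x m))
      + cylInt μ f (m + 2) x)
  else 0

lemma chi_eq_ite {n : ℕ} {r : SSp N} (hr : r ∈ V N n) (x : SSp N) :
    chi N n r x = if r = branch x n (x n) then 1 else 0 := by
  have : x ∈ cyl N (n + 1) r ↔ r = branch x n (x n) := by
    refine ⟨fun h => ?_, fun h => ?_⟩
    · rw [h n (by omega), branch_congr (fun j hj => h j (by omega)), branch_self hr]
    · rw [h, mem_cyl_branch]
      exact ⟨fun _ _ => rfl, rfl⟩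
  simp [chi, Set.indicator_apply, this]

lemma sum_Gmat_eq_greenKer (m : ℕ) (x y : SSp N) :
    ∑ r ∈ (V N (m + 1)).filter (fun r => r ∉ V N m),
      ∑ s ∈ (V N (m + 1)).filter (fun s => s ∉ V N m),
        Gmat N (m + 1) r s * chi N (m + 1) r x * chi N (m + 1) s y = greenKer m x y := by
  have h1 : ∀ r ∈ (V N (m + 1)).filter (fun r => r ∉ V N m),
      ∑ s ∈ (V N (m + 1)).filter (fun s => s ∉ V N m),
        Gmat N (m + 1) r s * chi N (m + 1) r x * chi N (m + 1) s y =
      if r = branch x (m + 1) (x (m + 1)) then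
        (if y m ≠ y (m + 1) then Gmat N (m + 1) r (branch y (m + 1) (y (m + 1))) else 0)
      else 0 := by
    intro r hr
    rw [chi_eq_ite (Finset.mem_filter.1 hr).1]
    split_ifs with hrx hy
    · rw [Finset.sum_eq_single (branch y (m + 1) (y (m + 1)))]
      · simp [chi_eq_ite (branch_mem_V y (m + 1) _)]
      · intro s hs hne
        simp [chi_eq_ite (Finset.mem_filter.1 hs).1, hne]
      · intro h
        exact (h (Finset.mem_filter.2 ⟨branch_mem_V _ _ _,
          (branch_succ_mem_V y m).not.2 hy⟩)).elim
    · refine Finset.sum_eq_zero fun s hs => ?_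
      obtain ⟨hs, hs'⟩ := Finset.mem_filter.1 hs
      rw [chi_eq_ite hs, if_neg, mul_zero]
      rintro rfl
      exact hs' ((branch_succ_mem_V y m).2 (not_not.1 hy))
    · simp
  rw [Finset.sum_congr rfl h1, Finset.sum_ite_eq']
  simp only [Finset.mem_filter, branch_mem_V, branch_succ_mem_V, true_and]
  unfold greenKer
  by_cases hx : x m = x (m + 1)
  · simp [hx]
  have heq : branch y (m + 1) (y (m + 1)) = branch x (m + 1) (x (m + 1)) ↔
      y ∈ cyl N (m + 1) x ∧ y (m + 1) = x (m + 1) := by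
    refine ⟨fun h => ⟨fun i hi => ?_, ?_⟩, fun ⟨h, h'⟩ => ?_⟩
    · rw [← branch_of_lt (p := y) (c := y (m + 1)) hi, h, branch_of_lt hi]
    · rw [← branch_of_le (p := y) (c := y (m + 1)) (le_refl (m + 1)), h, branch_of_le le_rfl]
    · rw [h', branch_congr h]
  have hU : branch y (m + 1) (y (m + 1)) ∈ U N (m + 1) (branch x (m + 1) (x (m + 1))) ↔
      y ∈ cyl N (m + 1) x ∧ y (m + 1) ≠ x (m + 1) := by
    simp only [U, Finset.mem_filter, branch_mem_V, true_and, ne_eq, heq]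
    have : (∀ i < m + 1, branch y (m + 1) (y (m + 1)) i = branch x (m + 1) (x (m + 1)) i) ↔
        y ∈ cyl N (m + 1) x :=
      forall₂_congr fun i hi => by rw [branch_of_lt hi, branch_of_lt hi]
    rw [this]
    tauto
  have hsucc : y ∈ cyl N (m + 2) x ↔ y ∈ cyl N (m + 1) x ∧ y (m + 1) = x (m + 1) := mem_cyl_succ
  simp only [Gmat, heq, hU, Set.indicator_apply, mem_cyl_branch, hsucc,
    Pi.one_apply, hx, ne_eq, not_false_eq_true, if_true]
  by_cases hc : y ∈ cyl N (m + 1) x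
  · have hm : y m = x m := hc m (by omega)
    by_cases ha : y (m + 1) = x (m + 1)
    · simp [hc, ha, hm, hx, Ne.symm hx]
      ring
    · by_cases hb : y (m + 1) = x m
      · simp [hc, hb, hm, hx]
      · simp [hc, ha, hb, hm, Ne.symm hb]
  · simp [hc]

lemma greenKer_eq_zero {m : ℕ} {x y : SSp N} (h : y ∉ cyl N (m + 1) x) : greenKer m x y = 0 := by
  have h1 : y ∉ cyl N (m + 2) (branch x (m + 1) (x m)) := fun h' => h (cyl_branch_subset _ _ _ h')
  have h2 : y ∉ cyl N (m + 2) x := fun h' => h (cyl_anti x (by omega) h')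
  simp [greenKer, h, h1, h2]

lemma greenFn_eq_tsum {x y : SSp N} (hxy : y ≠ x) : greenFn N x y = ∑' m, greenKer m x y := by
  have hne : {i | x i ≠ y i}.Nonempty := by
    by_contra h
    refine hxy (funext fun i => ?_)
    by_contra hi
    exact h ⟨i, fun h' => hi h'.symm⟩
  set n := sInf {i | x i ≠ y i} with hn
  have hmem : x n ≠ y n := Nat.sInf_mem hne
  rw [tsum_eq_sum (s := Finset.range n)]
  · rw [greenFn, rho, ← hn, Nat.add_sub_cancel, ← Finset.Ico_add_one_right_eq_Icc,
      Finset.sum_Ico_eq_sum_range, Nat.add_sub_cancel]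
    refine Finset.sum_congr rfl fun m _ => ?_
    rw [add_comm 1 m, Nat.add_sub_cancel, sum_Gmat_eq_greenKer]
  · intro m hm
    refine greenKer_eq_zero fun h => hmem (h n ?_).symm
    have := Finset.mem_range.not.1 hm
    omega

lemma greenKer_mul (f : SSp N → ℝ) (m : ℕ) (x : SSp N) :
    (fun y => greenKer m x y * f y) = if x m ≠ x (m + 1) then fun y =>
      1 / N * ((cyl N (m + 1) x).indicator f y
        - (cyl N (m + 2) (branch x (m + 1) (x m))).indicator f y
        + (cyl N (m + 2) x).indicator f y) else 0 := by
  have key : ∀ (s : Set (SSp N)) y, s.indicator (1 : SSp N → ℝ) y * f y = s.indicator f y := by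
    intro s y
    by_cases h : y ∈ s <;> simp [h]
  split_ifs with h
  · funext y
    rw [greenKer, if_pos h, ← key, ← key, ← key]
    ring
  · funext y
    simp [greenKer, h]

section Operator

variable {μ : Measure (SSp N)} {f : SSp N → ℝ}

lemma integrable_greenKer_mul (hf : Integrable f μ) (m : ℕ) (x : SSp N) :
    Integrable (fun y => greenKer m x y * f y) μ := by
  rw [greenKer_mul]
  split_ifs
  · exact (((hf.indicator (measurableSet_cyl _ _)).sub
      (hf.indicator (measurableSet_cyl _ _))).add
      (hf.indicator (measurableSet_cyl _ _))).const_mul _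
  · exact integrable_zero _ _ _

lemma integral_greenKer_mul (hf : Integrable f μ) (m : ℕ) (x : SSp N) :
    ∫ y, greenKer m x y * f y ∂μ = greenTerm μ f m x := by
  have hi : ∀ n z, Integrable ((cyl N n z).indicator f) μ :=
    fun n z => hf.indicator (measurableSet_cyl _ _)
  rw [greenKer_mul, greenTerm]
  split_ifs
  · rw [integral_const_mul, integral_add (by exact (hi _ _).sub (hi _ _)) (hi _ _),
      integral_sub (hi _ _) (hi _ _)]
    simp only [integral_indicator (measurableSet_cyl _ _), cylInt]
  · simp

lemma abs_greenKer_le (m : ℕ) (x y : SSp N) :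
    |greenKer m x y| ≤ 3 / N * (cyl N (m + 1) x).indicator 1 y := by
  by_cases hy : y ∈ cyl N (m + 1) x
  · have hb : ∀ s : Set (SSp N), 0 ≤ s.indicator (1 : SSp N → ℝ) y ∧
        s.indicator (1 : SSp N → ℝ) y ≤ 1 := fun s => by
      by_cases h : y ∈ s <;> simp [h]
    rw [greenKer, Set.indicator_of_mem hy]
    split_ifs
    · rw [abs_mul, abs_of_nonneg (by positivity : (0 : ℝ) ≤ 1 / N)]
      have h1 := hb (cyl N (m + 2) (branch x (m + 1) (x m)))
      have h2 := hb (cyl N (m + 2) x)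
      have : |(1 : SSp N → ℝ) y - (cyl N (m + 2) (branch x (m + 1) (x m))).indicator 1 y
          + (cyl N (m + 2) x).indicator 1 y| ≤ 3 := by
        rw [Pi.one_apply, abs_le]
        constructor <;> linarith [h1.1, h1.2, h2.1, h2.2]
      calc _ ≤ (1 / N : ℝ) * 3 := by gcongr
        _ = _ := by rw [Pi.one_apply]; ring
    · simp only [abs_zero, Pi.one_apply]
      positivity
  · simp [greenKer_eq_zero hy, hy]

lemma integral_norm_greenKer_mul_le [IsFiniteMeasure μ] (hμ : IsBernoulli N μ)
    (hf : Integrable f μ) {C : ℝ} (hC : ∀ x, |f x| ≤ C) (m : ℕ) (x : SSp N) :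
    ∫ y, ‖greenKer m x y * f y‖ ∂μ ≤ 3 / N * C * ((N : ℝ)⁻¹) ^ (m + 1) := by
  calc ∫ y, ‖greenKer m x y * f y‖ ∂μ
      ≤ ∫ y, 3 / N * C * (cyl N (m + 1) x).indicator 1 y ∂μ := by
        refine integral_mono (integrable_greenKer_mul hf m x).norm
          (((integrable_const (1 : ℝ)).indicator (measurableSet_cyl _ _)).const_mul _)
          fun y => ?_
        simp only [norm_mul, Real.norm_eq_abs]
        calc _ ≤ (3 / N * (cyl N (m + 1) x).indicator 1 y) * C :=
              mul_le_mul (abs_greenKer_le m x y) (hC y) (abs_nonneg _)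
                ((abs_nonneg _).trans (abs_greenKer_le m x y))
          _ = _ := by ring
    _ = _ := by
        rw [integral_const_mul, integral_indicator_one (measurableSet_cyl _ _), hμ.real_cyl]

lemma summable_bound (hN : 2 ≤ N) (C : ℝ) :
    Summable fun m : ℕ => 3 / N * C * ((N : ℝ)⁻¹) ^ (m + 1) := by
  have hlt : (N : ℝ)⁻¹ < 1 := inv_lt_one_of_one_lt₀ (by exact_mod_cast hN)
  exact ((summable_nat_add_iff 1).2
    (summable_geometric_of_lt_one (by positivity) hlt)).mul_left _

lemma Gop_eq_tsum [IsFiniteMeasure μ] (hN : 2 ≤ N) (hμ : IsBernoulli N μ) (hf : Continuous f)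
    (x : SSp N) : Gop N μ f x = ∑' m, greenTerm μ f m x := by
  obtain ⟨C, hC⟩ := exists_abs_le hf
  have hfi : Integrable f μ := integrable_of_continuous hf
  have hsum : Summable fun m => ∫ y, ‖greenKer m x y * f y‖ ∂μ :=
    Summable.of_nonneg_of_le (fun m => integral_nonneg fun y => norm_nonneg _)
      (integral_norm_greenKer_mul_le hμ hfi hC · x) (summable_bound hN C)
  have h := (hasSum_integral_of_summable_integral_norm
    (fun m => integrable_greenKer_mul hfi m x) hsum).tsum_eq
  simp only [integral_greenKer_mul hfi] at h
  rw [h, Gop, setIntegral_congr_fun (g := fun y => ∑' m, greenKer m x y * f y)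
    (measurableSet_singleton x).compl]
  · rw [Measure.restrict_eq_self_of_ae_mem]
    exact compl_mem_ae_iff.2 (hμ.measure_singleton hN x)
  · intro y hy
    simp only [tsum_mul_right, greenFn_eq_tsum hy]

lemma greenTerm_congr (μ : Measure (SSp N)) (f : SSp N → ℝ) {m : ℕ} {x y : SSp N}
    (h : ∀ i < m + 2, x i = y i) : greenTerm μ f m x = greenTerm μ f m y := by
  rw [greenTerm, greenTerm, h m (by omega), h (m + 1) (by omega),
    branch_congr (i := m + 1) (fun j hj => h j (by omega)), cylInt_congr μ f h,
    cylInt_congr μ f (n := m + 1) (fun j hj => h j (by omega))]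

lemma greenTerm_eq_zero (μ : Measure (SSp N)) (f : SSp N → ℝ) {m n : ℕ} {x : SSp N}
    (hx : x ∈ V N n) (h : n ≤ m) : greenTerm μ f m x = 0 :=
  if_neg (not_not.2 (mem_V.1 hx m h))

lemma continuous_Gop [IsFiniteMeasure μ] (hN : 2 ≤ N) (hμ : IsBernoulli N μ)
    (hf : Continuous f) : Continuous (Gop N μ f) := by
  obtain ⟨C, hC⟩ := exists_abs_le hf
  have hfi : Integrable f μ := integrable_of_continuous hf
  rw [funext (Gop_eq_tsum hN hμ hf)]
  refine continuous_tsum (fun m => continuous_of_cyl fun x y => greenTerm_congr μ f)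
    (summable_bound hN C) fun m x => ?_
  rw [← integral_greenKer_mul hfi]
  exact (norm_integral_le_integral_norm _).trans
    (integral_norm_greenKer_mul_le hμ hfi hC m x)

lemma Gop_eq_sum [IsFiniteMeasure μ] (hN : 2 ≤ N) (hμ : IsBernoulli N μ) (hf : Continuous f)
    {n : ℕ} {x : SSp N} (hx : x ∈ V N n) :
    Gop N μ f x = ∑ m ∈ Finset.range n, greenTerm μ f m x := by
  rw [Gop_eq_tsum hN hμ hf, tsum_eq_sum]
  intro m hm
  exact greenTerm_eq_zero μ f hx (not_lt.1 (Finset.mem_range.not.1 hm))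

lemma Gop_branch_sub [IsFiniteMeasure μ] (hN : 2 ≤ N) (hμ : IsBernoulli N μ)
    (hf : Continuous f) {k : ℕ} {p : SSp N} (hp : p ∈ V N (k + 1)) (c : Fin N) :
    Gop N μ f (branch p (k + 1) c) - Gop N μ f p =
      greenTerm μ f k (branch p (k + 1) c) - greenTerm μ f k p := by
  rw [Gop_eq_sum hN hμ hf (branch_mem_V p (k + 1) c), Gop_eq_sum hN hμ hf hp,
    Finset.sum_range_succ, Finset.sum_range_succ, Finset.sum_congr rfl
      (fun m hm => greenTerm_congr μ f (y := p) fun i hi =>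
        branch_of_lt (by have := Finset.mem_range.1 hm; omega))]
  ring

lemma greenTerm_branch (μ : Measure (SSp N)) (f : SSp N → ℝ) (k : ℕ) (p : SSp N) (c : Fin N) :
    greenTerm μ f k (branch p (k + 1) c) = if p k ≠ c then
      1 / N * (cylInt μ f (k + 1) p - cylInt μ f (k + 2) (branch p (k + 1) (p k))
        + cylInt μ f (k + 2) (branch p (k + 1) c)) else 0 := by
  rw [greenTerm, branch_of_lt (Nat.lt_succ_self k), branch_of_le le_rfl,
    cylInt_congr μ f (n := k + 1) (y := p) (fun i hi => branch_of_lt hi),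
    branch_congr (i := k + 1) (q := p) (fun i hi => branch_of_lt hi)]

lemma sum_greenTerm_branch (hN : N ≠ 0) (hf : Integrable f μ) (k : ℕ) (p : SSp N) :
    ∑ c, greenTerm μ f k (branch p (k + 1) c) =
      cylInt μ f (k + 1) p - cylInt μ f (k + 2) (branch p (k + 1) (p k)) := by
  have hN' : (N : ℝ) ≠ 0 := Nat.cast_ne_zero.2 hN
  set A := cylInt μ f (k + 1) p - cylInt μ f (k + 2) (branch p (k + 1) (p k)) with hA
  have h : ∀ c, greenTerm μ f k (branch p (k + 1) c) =
      1 / N * (A + cylInt μ f (k + 2) (branch p (k + 1) c)) - if p k = c then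
        1 / N * (A + cylInt μ f (k + 2) (branch p (k + 1) (p k))) else 0 := by
    intro c
    rw [greenTerm_branch]
    by_cases hc : p k = c
    · simp [hc]
    · simp [hc, hA]
  simp only [h, Finset.sum_sub_distrib, ← Finset.mul_sum, Finset.sum_add_distrib,
    sum_cylInt_branch hf, Finset.sum_ite_eq, Finset.mem_univ, if_true, Finset.sum_const,
    Finset.card_univ, Fintype.card_fin, nsmul_eq_mul]
  rw [show cylInt μ f (k + 1) p = A + cylInt μ f (k + 2) (branch p (k + 1) (p k)) by
    rw [hA]; ring]
  field_simp
  ring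

lemma sum_U_Gop_sub [IsFiniteMeasure μ] (hN : 2 ≤ N) (hμ : IsBernoulli N μ)
    (hf : Continuous f) {k : ℕ} {p : SSp N} (hp : p ∈ V N (k + 1)) :
    ∑ q ∈ U N (k + 1) p, (Gop N μ f q - Gop N μ f p) =
      (if p ∈ V N k then cylInt μ f (k + 1) p else 0) - cylInt μ f (k + 2) p := by
  have hN' : (N : ℝ) ≠ 0 := Nat.cast_ne_zero.2 (by omega)
  have hfi : Integrable f μ := integrable_of_continuous hf
  have hself := greenTerm_branch μ f k p (p (k + 1))
  have herase := Finset.sum_erase_eq_sub (f := fun c => greenTerm μ f k (branch p (k + 1) c))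
    (Finset.mem_univ (p (k + 1)))
  rw [sum_greenTerm_branch (by omega) hfi] at herase
  simp only [branch_self hp] at hself herase
  rw [sum_U hp, Finset.sum_congr rfl fun c _ => Gop_branch_sub hN hμ hf hp c,
    Finset.sum_sub_distrib, herase, Finset.sum_const, Finset.card_erase_of_mem (Finset.mem_univ _),
    Finset.card_univ, Fintype.card_fin, nsmul_eq_mul, Nat.cast_sub (by omega), Nat.cast_one]
  by_cases hk : p k = p (k + 1)
  · rw [if_pos ((mem_V_of_succ hp).2 hk), hself, if_neg (not_not.2 hk), hk, branch_self hp]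
    ring
  · rw [if_neg ((mem_V_of_succ hp).not.2 hk), hself, if_pos hk]
    field_simp
    ring

lemma H_Gop [IsFiniteMeasure μ] (hN : 2 ≤ N) (hμ : IsBernoulli N μ)
    (hf : Continuous f) {m : ℕ} {p : SSp N} (hp : p ∈ V N m) (hp0 : p ∉ V N 0) :
    H N m (Gop N μ f) p = -cylInt μ f (m + 1) p := by
  have hκ : p ∈ V N (kappa N p) := Nat.sInf_mem (s := {j | p ∈ V N j}) ⟨m, hp⟩
  obtain ⟨k, hk⟩ : ∃ k, kappa N p = k + 1 :=
    Nat.exists_eq_succ_of_ne_zero fun h => hp0 (h ▸ hκ)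
  have hkV : p ∉ V N k := fun h => by
    have : kappa N p ≤ k := Nat.sInf_le h
    omega
  have hkm : k + 1 ≤ m := hk ▸ Nat.sInf_le hp
  rw [H, hk]
  rw [hk] at hκ
  clear hp
  induction m, hkm using Nat.le_induction with
  | base =>
    rw [Finset.Icc_self, Finset.sum_singleton, sum_U_Gop_sub hN hμ hf hκ, if_neg hkV, zero_sub]
  | succ m hm ih =>
    rw [Finset.sum_Icc_succ_top (by omega), ih,
      sum_U_Gop_sub hN hμ hf (V_mono (by omega) hκ), if_pos (V_mono hm hκ)]
    ring

lemma abs_pow_mul_cylInt_sub_le [IsFiniteMeasure μ] (hN : N ≠ 0) (hμ : IsBernoulli N μ)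
    (hf : Integrable f μ) {n : ℕ} {x : SSp N} {ε : ℝ}
    (h : ∀ y ∈ cyl N n x, |f y - f x| ≤ ε) :
    |(N : ℝ) ^ n * cylInt μ f n x - f x| ≤ ε := by
  have hpos : (0 : ℝ) < (N : ℝ) ^ n := by
    have : (0 : ℝ) < N := Nat.cast_pos.2 (Nat.pos_of_ne_zero hN)
    positivity
  have hsub : cylInt μ f n x - ((N : ℝ) ^ n)⁻¹ * f x = ∫ y in cyl N n x, (f y - f x) ∂μ := by
    rw [integral_sub hf.integrableOn (integrable_const _), setIntegral_const, hμ.real_cyl,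
      smul_eq_mul, inv_pow, cylInt]
  have hle := norm_setIntegral_le_of_norm_le_const (f := fun y => f y - f x)
    (measure_lt_top μ _) h
  rw [← hsub, hμ.real_cyl, inv_pow, Real.norm_eq_abs] at hle
  calc |(N : ℝ) ^ n * cylInt μ f n x - f x|
      = (N : ℝ) ^ n * |cylInt μ f n x - ((N : ℝ) ^ n)⁻¹ * f x| := by
        rw [← abs_of_pos hpos, ← abs_mul, abs_of_pos hpos, mul_sub,
          mul_inv_cancel_left₀ hpos.ne']
    _ ≤ (N : ℝ) ^ n * (ε * ((N : ℝ) ^ n)⁻¹) := by gcongr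
    _ = ε := by field_simp

end Operator

/-- for every continuous `f`, `G_μ f ∈ 𝒟_0` with `Δ(G_μ f) = −f`,
i.e. `lim_{m→∞} max_{p ∈ V_m ∖ V_0} |N^{m+1} H_m (G_μ f)(p) + f(p)| = 0`. -/
theorem statement18 (N : ℕ) (hN : 2 ≤ N)
    (μ : Measure (SSp N)) [IsProbabilityMeasure μ] (hμ : IsBernoulli N μ)
    (f : SSp N → ℝ) (hf : Continuous f) :
    IsLaplacianOn N 0 (Gop N μ f) (fun x => -f x) := by
  refine ⟨continuous_Gop hN hμ hf, hf.neg, fun ε hε => ?_⟩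
  obtain ⟨n, hn⟩ := exists_forall_cyl_abs_sub_lt hf (half_pos hε)
  refine ⟨n, fun m hm p hp hp0 => ?_⟩
  have h := abs_pow_mul_cylInt_sub_le (by omega) hμ (integrable_of_continuous hf)
    (n := m + 1) (x := p) fun y hy => (hn p y (cyl_anti p (by omega) hy)).le
  rw [H_Gop hN hμ hf hp hp0, ← abs_neg]
  calc _ = |(N : ℝ) ^ (m + 1) * cylInt μ f (m + 1) p - f p| := by congr 1; ring
    _ ≤ ε / 2 := h
    _ < ε := half_lt_self hε
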